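/- For every s₁ > 0 there exists C > 0 such that for every μ ∈ ℤ, all nonnegative sequences ω⁽¹⁾, ω⁽²⁾, ω⁽³⁾ : ℤ² → [0,∞), and every j ∈ {1,2,3}: ( Σ_{n ∈ ℤ²} ( Σ_{(n₁,n₂,n₃) ∈ (ℤ²)³ : n₁ − n₂ + n₃ = n, Φ(n,n₁,n₂,n₃) = μ} ω⁽¹⁾_{n₁} ω⁽²⁾_{n₂} ω⁽³⁾_{n₃} )² )^{1/2} ≤ C ‖ω⁽ʲ⁾‖_{ℓ²(ℤ²)} ∏_{l ∈ {1,2,3}, l ≠ j} ‖ω⁽ˡ⁾‖_{ℓ²_{s₁}(ℤ²)}. -/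

import Mathlib

open scoped ENNReal NNReal

/-- `⟨n⟩ = (1+|n|²)^{1/2}` for `n ∈ ℤ²`. -/
noncomputable def jbZ2 (n : ℤ × ℤ) : ℝ := Real.sqrt (1 + ((n.1 : ℝ) ^ 2 + (n.2 : ℝ) ^ 2))

/-- `Φ(n,n₁,n₂,n₃) = |n|² - |n₁|² + |n₂|² - |n₃|²`. -/
def PhiZ2 (n n₁ n₂ n₃ : ℤ × ℤ) : ℤ :=
  (n.1 ^ 2 + n.2 ^ 2) - (n₁.1 ^ 2 + n₁.2 ^ 2) + (n₂.1 ^ 2 + n₂.2 ^ 2) - (n₃.1 ^ 2 + n₃.2 ^ 2)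

/-- The weighted `ℓ²_s(ℤ²)` norm (valued in `[0,∞]`). -/
noncomputable def l2sZ2 (s : ℝ) (ω : ℤ × ℤ → ℝ≥0) : ℝ≥0∞ :=
  (∑' n : ℤ × ℤ, ENNReal.ofReal (jbZ2 n ^ (2 * s)) * ((ω n : ℝ≥0∞)) ^ 2) ^ (1/2 : ℝ)

/-!
By duality, the square of the pairing of the convolution with a sequence `a` has to be bounded. The
constraint equates the total momentum and energy of `(n, n₂)` and `(n₁, n₃)`, up to a shift of the
energy by `μ`, so Cauchy–Schwarz over the common value separates the two pairs: `μ` disappears, and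
what remains are energies counting `n + m = n' + m'`, `|n|² + |m|² = |n'|² + |m'|²`. To keep `n₁`
and `n₃` apart, as is needed when `ω₂` is measured in `ℓ²`, one compares instead the differences of
`(n, n₁)` and `(n₂, n₃)`; transposing terms, these give the same energies.

A pair `(n, m)` of given sum and energy has `m` on a given circle, so a further Cauchy–Schwarz
leaves the sum of `(1 + |m|²) ^ (-s)` over the lattice points of a circle, to be bounded uniformly.
The circumradius formula `4 A R = a b c` bounds the radius in terms of the sides of any triangle of
lattice points inscribed in the circle, hence all but two points are at least a power of the radius
away from the origin; the divisor bound in `ℤ[i]` shows that these are too few to spoil the decay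
of the weight.
-/

section DivisorBound

open UniqueFactorizationMonoid

lemma one_add_natCast_le_rpow_pow {P ε : ℝ} (hP : 0 ≤ P) (h : 2 ≤ P ^ ε) (k : ℕ) :
    (k : ℝ) + 1 ≤ (P ^ k) ^ ε :=
  calc (k : ℝ) + 1 = 1 + k * 1 := by ring
    _ ≤ (1 + 1) ^ k := one_add_mul_le_pow (by norm_num) k
    _ ≤ (P ^ ε) ^ k := by gcongr; linarith
    _ = (P ^ k) ^ ε := (Real.rpow_pow_comm hP ε k)

lemma one_add_natCast_le_mul_rpow_pow {P ε : ℝ} (hP : 2 ≤ P) (hε : 0 < ε) (k : ℕ) :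
    (k : ℝ) + 1 ≤ (1 + 1 / (ε * Real.log 2)) * (P ^ k) ^ ε := by
  set c := ε * Real.log 2
  have hc : 0 < c := mul_pos hε (Real.log_pos one_lt_two)
  have base_le : 1 + c ≤ P ^ ε :=
    calc 1 + c ≤ Real.exp c := by linarith [Real.add_one_le_exp c]
      _ = 2 ^ ε := by rw [Real.rpow_def_of_pos two_pos, mul_comm]
      _ ≤ P ^ ε := by gcongr
  calc (k : ℝ) + 1 ≤ (k : ℝ) + 1 + (k * c + 1 / c) := le_add_of_nonneg_right (by positivity)
    _ = (1 + 1 / c) * (1 + k * c) := by field_simp; ring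
    _ ≤ (1 + 1 / c) * (1 + c) ^ k := by gcongr; exact one_add_mul_le_pow (by linarith) k
    _ ≤ (1 + 1 / c) * (P ^ ε) ^ k := by gcongr
    _ = (1 + 1 / c) * (P ^ k) ^ ε := by rw [Real.rpow_pow_comm (by linarith)]

theorem exists_card_Iic_multiset_le_rpow {α : Type*} [DecidableEq α] (N : α → ℕ) [Northcott N]
    {ε : ℝ} (hε : 0 < ε) :
    ∃ C : ℝ, 0 < C ∧ ∀ s : Multiset α, (∀ p ∈ s, 2 ≤ N p) →
      ((Finset.Iic s).card : ℝ) ≤ C * ((s.map N).prod : ℝ) ^ ε := by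
  classical
  set K : ℝ := 1 + 1 / (ε * Real.log 2)
  have one_le_K : 1 ≤ K :=
    le_add_of_nonneg_right (one_div_nonneg.2 (mul_pos hε (Real.log_pos one_lt_two)).le)
  have hsmall : {p | N p ≤ ⌈(2 : ℝ) ^ (1 / ε)⌉₊}.Finite := Northcott.finite_le _
  refine ⟨K ^ hsmall.toFinset.card, by positivity, fun s hs => ?_⟩
  have factor_le (p : α) (hp : p ∈ s.toFinset) : (s.count p : ℝ) + 1 ≤
      (if p ∈ hsmall.toFinset then K else 1) * ((N p : ℝ) ^ s.count p) ^ ε := by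
    have two_le : (2 : ℝ) ≤ N p := by exact_mod_cast hs p (Multiset.mem_toFinset.1 hp)
    split_ifs with h
    · exact one_add_natCast_le_mul_rpow_pow two_le hε _
    · rw [one_mul]
      refine one_add_natCast_le_rpow_pow (by positivity) ?_ _
      rw [hsmall.mem_toFinset, Set.mem_ofPred_eq, not_le] at h
      exact (Real.rpow_inv_le_iff_of_pos two_pos.le (by positivity) hε).1
        (by simpa only [one_div] using (Nat.lt_of_ceil_lt h).le)
  have prod_eq : ∏ p ∈ s.toFinset, (N p : ℝ) ^ s.count p = ((s.map N).prod : ℝ) := by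
    rw [Finset.prod_multiset_map_count]
    push_cast
    rfl
  calc ((Finset.Iic s).card : ℝ) = ∏ p ∈ s.toFinset, ((s.count p : ℝ) + 1) := by
        rw [Multiset.card_Iic]
        push_cast
        rfl
    _ ≤ ∏ p ∈ s.toFinset,
          (if p ∈ hsmall.toFinset then K else 1) * ((N p : ℝ) ^ s.count p) ^ ε :=
        Finset.prod_le_prod (fun _ _ => by positivity) factor_le
    _ = K ^ (s.toFinset.filter (· ∈ hsmall.toFinset)).card * ((s.map N).prod : ℝ) ^ ε := by
        rw [Finset.prod_mul_distrib, Real.finsetProd_rpow _ _ (fun _ _ => by positivity), prod_eq,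
          ← Finset.prod_filter, Finset.prod_const]
    _ ≤ K ^ hsmall.toFinset.card * ((s.map N).prod : ℝ) ^ ε := by
        gcongr
        exact fun p hp => (Finset.mem_filter.1 hp).2

lemma card_le_card_units_mul_card_Iic_normalizedFactors {R : Type*} [CommMonoidWithZero R]
    [UniqueFactorizationMonoid R] [NormalizationMonoid R] [DecidableEq R] [Finite Rˣ] {w : R}
    (hw : w ≠ 0) {T : Finset R} (hT : ∀ z ∈ T, z ∣ w) :
    T.card ≤ Nat.card Rˣ * (Finset.Iic (normalizedFactors w)).card := by
  have := Fintype.ofFinite Rˣ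
  have subset_image : T ⊆ (Finset.univ ×ˢ Finset.Iic (normalizedFactors w)).image
      (fun x : Rˣ × Multiset R => x.2.prod * x.1) := fun z hz => by
    have hz0 : z ≠ 0 := ne_zero_of_dvd_ne_zero hw (hT z hz)
    obtain ⟨u, hu⟩ := prod_normalizedFactors hz0
    refine Finset.mem_image.2 ⟨(u, normalizedFactors z), ?_, hu⟩
    exact Finset.mem_product.2 ⟨Finset.mem_univ _, Finset.mem_Iic.2
      ((dvd_iff_normalizedFactors_le_normalizedFactors hz0 hw).1 (hT z hz))⟩
  calc T.card ≤ _ := Finset.card_le_card subset_image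
    _ ≤ _ := Finset.card_image_le
    _ = _ := by rw [Finset.card_product, Finset.card_univ, Nat.card_eq_fintype_card]

lemma finite_units_of_northcott {R : Type*} [Monoid R] (N : R →* ℕ) [Northcott N] :
    Finite Rˣ := by
  have := (Northcott.finite_le (h := N) 1).to_subtype
  exact Finite.of_injective
    (fun u : Rˣ => (⟨u, (Nat.isUnit_iff.1 (u.isUnit.map N)).le⟩ : {z | N z ≤ 1}))
    fun u v huv => Units.ext (congrArg Subtype.val huv)

lemma two_le_map_of_prime {R : Type*} [CommMonoidWithZero R] [IsCancelMulZero R] (N : R →* ℕ)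
    [Northcott N] {p : R} (hp : Prime p) : 2 ≤ N p := by
  by_contra! h
  refine Set.infinite_of_injective_forall_mem
    (pow_injective_of_not_isUnit hp.not_isUnit hp.ne_zero) (fun n => ?_)
    (Northcott.finite_le (h := N) 1)
  rw [Set.mem_ofPred_eq, map_pow]
  exact pow_le_one₀ (Nat.zero_le _) (by omega)

theorem exists_card_divisors_le_rpow {R : Type*} [CommMonoidWithZero R]
    [UniqueFactorizationMonoid R] (N : R →* ℕ) [Northcott N] {ε : ℝ} (hε : 0 < ε) :
    ∃ C : ℝ, 0 < C ∧ ∀ w : R, w ≠ 0 → ∀ T : Finset R, (∀ z ∈ T, z ∣ w) →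
      (T.card : ℝ) ≤ C * (N w : ℝ) ^ ε := by
  classical
  let _ := UniqueFactorizationMonoid.strongNormalizationMonoid (α := R)
  have := finite_units_of_northcott N
  obtain ⟨C, hC, hcard⟩ := exists_card_Iic_multiset_le_rpow N hε
  refine ⟨Nat.card Rˣ * C, mul_pos (by exact_mod_cast Nat.card_pos) hC, fun w hw T hT => ?_⟩
  have norm_prod : ((normalizedFactors w).map N).prod = N w := by
    rw [← map_multiset_prod, associated_iff_eq.1 ((prod_normalizedFactors hw).map N)]
  calc (T.card : ℝ) ≤ Nat.card Rˣ * (Finset.Iic (normalizedFactors w)).card := by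
        exact_mod_cast card_le_card_units_mul_card_Iic_normalizedFactors hw hT
    _ ≤ Nat.card Rˣ * (C * (N w : ℝ) ^ ε) := by
        gcongr
        rw [← norm_prod]
        exact hcard _ fun p hp => two_le_map_of_prime N (prime_of_normalized_factor p hp)
    _ = Nat.card Rˣ * C * (N w : ℝ) ^ ε := by ring

end DivisorBound

/-- The norm of `ℤ[i]`, valued in `ℕ` as the divisor bound for Northcott functions requires. -/
def gaussianNorm : GaussianInt →* ℕ :=
  (Int.natAbsHom : ℤ →* ℕ).comp Zsqrtd.normMonoidHom

lemma gaussianNorm_cast (z : GaussianInt) : (gaussianNorm z : ℤ) = z.norm :=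
  Int.natAbs_of_nonneg (GaussianInt.norm_nonneg z)

instance : Northcott gaussianNorm where
  finite_le B := by
    have hinj : Function.Injective (fun z : GaussianInt => (z.re, z.im)) :=
      fun _ _ h => Zsqrtd.ext (Prod.ext_iff.1 h).1 (Prod.ext_iff.1 h).2
    refine ((Set.finite_Icc (-(B : ℤ)) B).prod (Set.finite_Icc (-(B : ℤ)) B)).preimage
      hinj.injOn |>.subset fun z hz => ?_
    have hnorm : z.re * z.re + z.im * z.im ≤ B := by
      have : (gaussianNorm z : ℤ) ≤ B := by exact_mod_cast hz
      rw [gaussianNorm_cast, Zsqrtd.norm_def] at this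
      linarith
    refine ⟨⟨?_, ?_⟩, ?_, ?_⟩ <;> nlinarith [mul_self_nonneg z.re, mul_self_nonneg z.im,
      Int.le_self_sq z.re, Int.le_self_sq z.im, Int.le_self_sq (-z.re), Int.le_self_sq (-z.im)]

theorem exists_card_norm_eq_le_rpow {ε : ℝ} (hε : 0 < ε) :
    ∃ C : ℝ, 0 < C ∧ ∀ M : ℤ, 0 < M → ∀ T : Finset GaussianInt, (∀ z ∈ T, z.norm = M) →
      (T.card : ℝ) ≤ C * (M : ℝ) ^ ε := by
  obtain ⟨C, hC, hcard⟩ := exists_card_divisors_le_rpow gaussianNorm (half_pos hε)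
  refine ⟨C, hC, fun M hM T hT => ?_⟩
  have hdvd (z) (hz : z ∈ T) : z ∣ (M : GaussianInt) :=
    ⟨star z, by rw [← hT z hz, Zsqrtd.norm_eq_mul_conj]⟩
  have hnorm : (gaussianNorm M : ℝ) = (M : ℝ) ^ (2 : ℝ) := by
    have : (gaussianNorm M : ℤ) = M ^ 2 := by rw [gaussianNorm_cast, Zsqrtd.norm_intCast, sq]
    rw [Real.rpow_two]
    exact_mod_cast this
  have hM' : (0 : ℝ) ≤ M := by exact_mod_cast hM.le
  calc (T.card : ℝ) ≤ C * (gaussianNorm M : ℝ) ^ (ε / 2) :=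
        hcard M (Int.cast_ne_zero.2 hM.ne') T hdvd
    _ = C * (M : ℝ) ^ ε := by rw [hnorm, ← Real.rpow_mul hM', mul_div_cancel₀ _ two_ne_zero]

/-- `|n|²` for `n ∈ ℤ²`, the squared Euclidean norm. -/
def sqNorm (n : ℤ × ℤ) : ℤ := n.1 ^ 2 + n.2 ^ 2

lemma sqNorm_nonneg (n : ℤ × ℤ) : 0 ≤ sqNorm n := by
  unfold sqNorm
  positivity

lemma sqNorm_pos {n : ℤ × ℤ} (hn : n ≠ 0) : 0 < sqNorm n := by
  rw [Ne, Prod.ext_iff, not_and_or] at hn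
  unfold sqNorm
  rcases hn with h | h <;> simp only [Prod.fst_zero, Prod.snd_zero] at h <;> positivity

lemma sqNorm_sub_le (m n : ℤ × ℤ) : sqNorm (m - n) ≤ 2 * (sqNorm m + sqNorm n) := by
  simp only [sqNorm, Prod.fst_sub, Prod.snd_sub]
  linarith [sq_nonneg (m.1 + n.1), sq_nonneg (m.2 + n.2)]

-- `16 A² R² = a² b² c²` for the triangle `v, v + 2x, v + 2y` with circumcentre `0`.
lemma circumradius_identity {x y v : ℤ × ℤ} (hx : sqNorm (v + 2 • x) = sqNorm v)
    (hy : sqNorm (v + 2 • y) = sqNorm v) :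
    sqNorm v * (x.1 * y.2 - x.2 * y.1) ^ 2 = sqNorm x * sqNorm y * sqNorm (x - y) := by
  simp only [sqNorm, Prod.fst_add, Prod.snd_add, Prod.fst_sub, Prod.snd_sub, two_nsmul] at *
  set d := x.1 * y.2 - x.2 * y.1
  have orth_x : x.1 * v.1 + x.2 * v.2 = -(x.1 ^ 2 + x.2 ^ 2) := by linarith
  have orth_y : y.1 * v.1 + y.2 * v.2 = -(y.1 ^ 2 + y.2 ^ 2) := by linarith
  have cramer_fst : d * v.1 = (y.1 ^ 2 + y.2 ^ 2) * x.2 - (x.1 ^ 2 + x.2 ^ 2) * y.2 := by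
    linear_combination y.2 * orth_x - x.2 * orth_y
  have cramer_snd : d * v.2 = (x.1 ^ 2 + x.2 ^ 2) * y.1 - (y.1 ^ 2 + y.2 ^ 2) * x.1 := by
    linear_combination x.1 * orth_y - y.1 * orth_x
  calc (v.1 ^ 2 + v.2 ^ 2) * d ^ 2 = (d * v.1) ^ 2 + (d * v.2) ^ 2 := by ring
    _ = _ := by rw [cramer_fst, cramer_snd]; ring

lemma le_sqNorm_mul_of_three_points {σ a b c : ℤ × ℤ} {M : ℤ} (ha : sqNorm (2 • a - σ) = M)
    (hb : sqNorm (2 • b - σ) = M) (hc : sqNorm (2 • c - σ) = M) (hab : a ≠ b) (hac : a ≠ c)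
    (hbc : b ≠ c) :
    0 < M ∧ M ≤ sqNorm (b - a) * sqNorm (c - a) * sqNorm (b - c) := by
  have key := circumradius_identity (v := 2 • a - σ) (x := b - a) (y := c - a)
    (by rw [ha, ← hb]; congr 1; module) (by rw [ha, ← hc]; congr 1; module)
  rw [ha, sub_sub_sub_cancel_right] at key
  set d := (b - a).1 * (c - a).2 - (b - a).2 * (c - a).1
  have hpos : 0 < M * d ^ 2 := by
    rw [key]
    exact mul_pos (mul_pos (sqNorm_pos (sub_ne_zero.2 hab.symm))
      (sqNorm_pos (sub_ne_zero.2 hac.symm))) (sqNorm_pos (sub_ne_zero.2 hbc))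
  have hM : 0 < M := pos_of_mul_pos_left hpos (sq_nonneg d)
  refine ⟨hM, key ▸ le_mul_of_one_le_right hM.le ?_⟩
  exact pos_of_mul_pos_right hpos hM.le

lemma exists_le_sqNorm_pow_of_two_lt_card {σ : ℤ × ℤ} {M : ℤ} {T : Finset (ℤ × ℤ)}
    (hT : ∀ m ∈ T, sqNorm (2 • m - σ) = M) (hcard : 2 < T.card) :
    0 < M ∧ ∃ m ∈ T, M ≤ (4 * sqNorm m) ^ 3 := by
  obtain ⟨a, b, c, ha, hb, hc, hab, hac, hbc⟩ := Finset.two_lt_card_iff.1 hcard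
  obtain ⟨hM, hle⟩ := le_sqNorm_mul_of_three_points (hT a ha) (hT b hb) (hT c hc) hab hac hbc
  obtain ⟨m, hm, hmax⟩ := Finset.exists_max_image T sqNorm ⟨a, ha⟩
  have side_le {p q : ℤ × ℤ} (hp : p ∈ T) (hq : q ∈ T) : sqNorm (p - q) ≤ 4 * sqNorm m := by
    linarith [sqNorm_sub_le p q, hmax p hp, hmax q hq]
  refine ⟨hM, m, hm, hle.trans ?_⟩
  have := sqNorm_nonneg m
  calc sqNorm (b - a) * sqNorm (c - a) * sqNorm (b - c)
      ≤ (4 * sqNorm m) * (4 * sqNorm m) * (4 * sqNorm m) := by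
        gcongr
        exacts [sqNorm_nonneg _, sqNorm_nonneg _, side_le hb ha, side_le hc ha, side_le hb hc]
    _ = (4 * sqNorm m) ^ 3 := by ring

lemma exists_card_circle_le_rpow {ε : ℝ} (hε : 0 < ε) :
    ∃ C : ℝ, 0 < C ∧ ∀ (σ : ℤ × ℤ) (M : ℤ), 0 < M → ∀ T : Finset (ℤ × ℤ),
      (∀ m ∈ T, sqNorm (2 • m - σ) = M) → (T.card : ℝ) ≤ C * (M : ℝ) ^ ε := by
  classical
  obtain ⟨C, hC, hcard⟩ := exists_card_norm_eq_le_rpow hε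
  refine ⟨C, hC, fun σ M hM T hT => ?_⟩
  let toGaussian (m : ℤ × ℤ) : GaussianInt := ⟨(2 • m - σ).1, (2 • m - σ).2⟩
  have hinj : Function.Injective toGaussian := fun m n h => by
    simp only [toGaussian, Zsqrtd.ext_iff, Prod.fst_sub, Prod.snd_sub, two_nsmul, Prod.fst_add,
      Prod.snd_add] at h
    ext <;> omega
  rw [← Finset.card_image_of_injective T hinj]
  refine hcard M hM _ fun z hz => ?_
  obtain ⟨m, hm, rfl⟩ := Finset.mem_image.1 hz
  rw [← hT m hm, Zsqrtd.norm_def, sqNorm]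
  ring

lemma one_add_sqNorm_pos (n : ℤ × ℤ) : 0 < 1 + (sqNorm n : ℝ) := by
  have : (0 : ℝ) ≤ sqNorm n := by exact_mod_cast sqNorm_nonneg n
  linarith

lemma one_add_sqNorm_rpow_neg_le_one {s : ℝ} (hs : 0 ≤ s) (m : ℤ × ℤ) :
    (1 + (sqNorm m : ℝ)) ^ (-s) ≤ 1 :=
  Real.rpow_le_one_of_one_le_of_nonpos
    (le_add_of_nonneg_right (by exact_mod_cast sqNorm_nonneg m)) (neg_nonpos.2 hs)

lemma one_add_sqNorm_rpow_neg_le {s : ℝ} (hs : 0 ≤ s) {m : ℤ × ℤ} {M : ℤ} (hM : 0 < M)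
    (h : M ≤ (4 * sqNorm m) ^ 3) :
    (1 + (sqNorm m : ℝ)) ^ (-s) ≤ 4 ^ s * ((M : ℝ) ^ (s / 3))⁻¹ := by
  have hm : (0 : ℝ) ≤ sqNorm m := by exact_mod_cast sqNorm_nonneg m
  have : (0 : ℝ) < M := by exact_mod_cast hM
  have rpow_le : (M : ℝ) ^ (s / 3) ≤ 4 ^ s * (1 + (sqNorm m : ℝ)) ^ s :=
    calc (M : ℝ) ^ (s / 3) ≤ ((4 * (1 + (sqNorm m : ℝ))) ^ (3 : ℝ)) ^ (s / 3) := by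
          gcongr
          calc (M : ℝ) ≤ (4 * (sqNorm m : ℝ)) ^ 3 := by exact_mod_cast h
            _ ≤ (4 * (1 + (sqNorm m : ℝ))) ^ 3 := by gcongr; linarith
            _ = _ := (Real.rpow_ofNat _ 3).symm
      _ = (4 * (1 + (sqNorm m : ℝ))) ^ s := by
          rw [← Real.rpow_mul (by positivity), mul_div_cancel₀ _ three_ne_zero]
      _ = _ := Real.mul_rpow (by norm_num) (by positivity)
  rw [Real.rpow_neg (by positivity), ← div_eq_mul_inv, le_div_iff₀ (by positivity),
    inv_mul_le_iff₀ (by positivity), mul_comm]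
  exact rpow_le

theorem exists_sum_circle_le {s : ℝ} (hs : 0 < s) :
    ∃ C : ℝ, 0 < C ∧ ∀ (σ : ℤ × ℤ) (M : ℤ) (T : Finset (ℤ × ℤ)),
      (∀ m ∈ T, sqNorm (2 • m - σ) = M) → ∑ m ∈ T, (1 + (sqNorm m : ℝ)) ^ (-s) ≤ C := by
  obtain ⟨C, hC, hcard⟩ := exists_card_circle_le_rpow (div_pos hs three_pos)
  refine ⟨2 + C * 4 ^ s, by positivity, fun σ M T hT => ?_⟩
  let far (m : ℤ × ℤ) : Prop := 0 < M ∧ M ≤ (4 * sqNorm m) ^ 3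
  have near_le : ∑ m ∈ T with ¬ far m, (1 + (sqNorm m : ℝ)) ^ (-s) ≤ 2 := by
    have card_near : (T.filter (¬ far ·)).card ≤ 2 := by
      by_contra! hlt
      obtain ⟨hM, m, hm, hle⟩ := exists_le_sqNorm_pow_of_two_lt_card
        (fun m hm => hT m (Finset.mem_of_mem_filter m hm)) hlt
      exact (Finset.mem_filter.1 hm).2 ⟨hM, hle⟩
    calc _ ≤ ∑ m ∈ T with ¬ far m, (1 : ℝ) :=
          Finset.sum_le_sum fun m _ => one_add_sqNorm_rpow_neg_le_one hs.le m
      _ ≤ 2 := by rw [Finset.sum_const, nsmul_one]; exact_mod_cast card_near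
  have far_le : ∑ m ∈ T with far m, (1 + (sqNorm m : ℝ)) ^ (-s) ≤ C * 4 ^ s := by
    rcases (T.filter far).eq_empty_or_nonempty with hempty | ⟨m₀, hm₀⟩
    · rw [hempty, Finset.sum_empty]
      positivity
    have hM : 0 < M := (Finset.mem_filter.1 hm₀).2.1
    have : (0 : ℝ) < M := by exact_mod_cast hM
    calc _ ≤ ∑ m ∈ T with far m, 4 ^ s * ((M : ℝ) ^ (s / 3))⁻¹ :=
          Finset.sum_le_sum fun m hm =>
            one_add_sqNorm_rpow_neg_le hs.le hM (Finset.mem_filter.1 hm).2.2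
      _ = (T.filter far).card * (4 ^ s * ((M : ℝ) ^ (s / 3))⁻¹) := by
          rw [Finset.sum_const, nsmul_eq_mul]
      _ ≤ C * (M : ℝ) ^ (s / 3) * (4 ^ s * ((M : ℝ) ^ (s / 3))⁻¹) := by
          gcongr
          exact hcard σ M hM _ fun m hm => hT m (Finset.mem_of_mem_filter m hm)
      _ = C * 4 ^ s := by field_simp
  rw [← Finset.sum_filter_add_sum_filter_not T far, add_comm]
  exact add_le_add near_le far_le

lemma rpow_one_half_le_of_le_sq {x y : ℝ≥0∞} (h : x ≤ y ^ 2) : x ^ (1 / 2 : ℝ) ≤ y := by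
  rw [one_div, ENNReal.rpow_inv_le_iff two_pos, ENNReal.rpow_two]
  exact h

lemma sq_tsum_le_tsum_mul_tsum_of_sq_le_mul {ι : Type*} {r f g : ι → ℝ≥0∞}
    (h : ∀ i, r i ^ 2 ≤ f i * g i) : (∑' i, r i) ^ 2 ≤ (∑' i, f i) * ∑' i, g i := by
  let _ : MeasurableSpace ι := ⊤
  have sqrt_sq (x : ℝ≥0∞) : (x ^ (1 / 2 : ℝ)) ^ (2 : ℝ) = x := by
    rw [← ENNReal.rpow_mul, one_div_mul_cancel two_ne_zero, ENNReal.rpow_one]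
  have r_le (i : ι) : r i ≤ f i ^ (1 / 2 : ℝ) * g i ^ (1 / 2 : ℝ) := by
    rw [← ENNReal.mul_rpow_of_nonneg _ _ one_half_pos.le, one_div,
      ENNReal.le_rpow_inv_iff two_pos, ENNReal.rpow_two]
    exact h i
  have holder_ineq := ENNReal.lintegral_mul_le_Lp_mul_Lq MeasureTheory.Measure.count
    Real.HolderConjugate.two_two (f := fun i => f i ^ (1 / 2 : ℝ)) (g := fun i => g i ^ (1 / 2 : ℝ))
    measurable_from_top.aemeasurable measurable_from_top.aemeasurable
  simp only [MeasureTheory.lintegral_count, Pi.mul_apply, sqrt_sq] at holder_ineq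
  rw [← ENNReal.rpow_two, ← ENNReal.le_rpow_inv_iff two_pos, ← one_div,
    ENNReal.mul_rpow_of_nonneg _ _ one_half_pos.le]
  exact (ENNReal.tsum_le_tsum r_le).trans holder_ineq

lemma tsum_sq_le_of_forall_sq_tsum_mul_le {ι : Type*} {G : ι → ℝ≥0∞} {K : ℝ≥0∞}
    (h : ∀ a : ι → ℝ≥0∞, (∑' i, a i * G i) ^ 2 ≤ (∑' i, a i ^ 2) * K) :
    ∑' i, G i ^ 2 ≤ K := by
  classical
  rcases eq_or_ne K ⊤ with rfl | hK
  · exact le_top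
  have G_sq_ne_top (i : ι) : G i ^ 2 ≠ ⊤ := by
    refine ne_top_of_le_ne_top hK ?_
    simpa [Pi.single_apply, ite_pow] using h (Pi.single i 1)
  refine tsum_le_of_sum_le' zero_le fun s => ?_
  set S := ∑ i ∈ s, G i ^ 2
  rcases eq_or_ne S 0 with hS | hS
  · exact hS ▸ zero_le
  have S_ne_top : S ≠ ⊤ := ENNReal.sum_ne_top.2 fun i _ => G_sq_ne_top i
  let a (i : ι) : ℝ≥0∞ := if i ∈ s then G i else 0
  have pairing_eq : ∑' i, a i * G i = S :=
    (tsum_eq_sum fun i hi => by simp only [a, if_neg hi, zero_mul]).trans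
      (Finset.sum_congr rfl fun i hi => by simp only [a, if_pos hi, sq])
  have norm_sq_eq : ∑' i, a i ^ 2 = S :=
    (tsum_eq_sum fun i hi => by simp only [a, if_neg hi, sq, zero_mul]).trans
      (Finset.sum_congr rfl fun i hi => by simp only [a, if_pos hi])
  have S_sq_le := h a
  rw [pairing_eq, norm_sq_eq, sq] at S_sq_le
  exact (ENNReal.mul_le_mul_iff_right hS S_ne_top).1 S_sq_le

section FiberEnergy

variable {α β P Q κ : Type*}

/-- The energy of `f` along `φ`, i.e. the squared `ℓ²` norm of the pushforward of `f` under `φ`.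
For `φ p = p.1 + p.2` and an indicator function it is the additive energy. -/
noncomputable def fiberEnergy (φ : P → κ) (f : P → ℝ≥0∞) : ℝ≥0∞ :=
  ∑' k, (∑' p : φ ⁻¹' {k}, f p) ^ 2

lemma tsum_mul_tsum_subtype (r : α → β → Prop) (f : α → ℝ≥0∞) (g : β → ℝ≥0∞) :
    ∑' a, f a * ∑' b : {b // r a b}, g b =
      ∑' x : {x : α × β // r x.1 x.2}, f x.1.1 * g x.1.2 := by
  rw [← (Equiv.subtypeProdEquivSigmaSubtype r).symm.tsum_eq, ENNReal.tsum_sigma']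
  simp only [← ENNReal.tsum_mul_left]
  rfl

lemma tsum_fiber_mul_fiber (φ : P → κ) (ψ : Q → κ) (f : P → ℝ≥0∞) (g : Q → ℝ≥0∞) :
    ∑' k, (∑' p : φ ⁻¹' {k}, f p) * (∑' q : ψ ⁻¹' {k}, g q) =
      ∑' x : {x : P × Q // ψ x.2 = φ x.1}, f x.1.1 * g x.1.2 := by
  rw [← tsum_mul_tsum_subtype (fun p q => ψ q = φ p),
    ← ENNReal.tsum_fiberwise (fun p => f p * ∑' q : {q // ψ q = φ p}, g q) φ]
  refine tsum_congr fun k => ?_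
  rw [← ENNReal.tsum_mul_right]
  refine tsum_congr fun p => ?_
  obtain ⟨p, rfl⟩ := p
  rfl

lemma fiberEnergy_eq_tsum (φ : P → κ) (f : P → ℝ≥0∞) :
    fiberEnergy φ f = ∑' x : {x : P × P // φ x.2 = φ x.1}, f x.1.1 * f x.1.2 := by
  simp only [fiberEnergy, sq, tsum_fiber_mul_fiber]

lemma sq_tsum_le_fiberEnergy_mul (φ : P → κ) (ψ : Q → κ) (f : P → ℝ≥0∞) (g : Q → ℝ≥0∞) :
    (∑' x : {x : P × Q // ψ x.2 = φ x.1}, f x.1.1 * g x.1.2) ^ 2 ≤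
      fiberEnergy φ f * fiberEnergy ψ g := by
  rw [← tsum_fiber_mul_fiber]
  exact sq_tsum_le_tsum_mul_tsum_of_sq_le_mul fun k => (mul_pow _ _ 2).le

lemma fiberEnergy_comp_equiv {P' : Type*} (e : P' ≃ P) (φ : P → κ) (f : P → ℝ≥0∞) :
    fiberEnergy (φ ∘ e) (f ∘ e) = fiberEnergy φ f := by
  rw [fiberEnergy_eq_tsum, fiberEnergy_eq_tsum,
    ← ((e.prodCongr e).subtypeEquiv (q := fun x : P × P => φ x.2 = φ x.1)
      fun _ => Iff.rfl).tsum_eq]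
  rfl

lemma fiberEnergy_comp_of_injective {κ' : Type*} {e : κ → κ'} (he : Function.Injective e)
    (φ : P → κ) (f : P → ℝ≥0∞) : fiberEnergy (fun p => e (φ p)) f = fiberEnergy φ f := by
  rw [fiberEnergy_eq_tsum, fiberEnergy_eq_tsum,
    ← (Equiv.subtypeEquivRight fun _ => he.eq_iff).tsum_eq]
  rfl

lemma fiberEnergy_le_mul_tsum {φ : P → κ} {w : P → ℝ≥0∞} {C : ℝ≥0∞}
    (hw₀ : ∀ p, w p ≠ 0) (hw : ∀ p, w p ≠ ⊤) (hC : ∀ k, ∑' p : φ ⁻¹' {k}, (w p)⁻¹ ≤ C)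
    (f : P → ℝ≥0∞) : fiberEnergy φ f ≤ C * ∑' p, w p * f p ^ 2 :=
  calc fiberEnergy φ f ≤ ∑' k, C * ∑' p : φ ⁻¹' {k}, w p * f p ^ 2 := by
        refine ENNReal.tsum_le_tsum fun k => ?_
        refine (sq_tsum_le_tsum_mul_tsum_of_sq_le_mul (f := fun p : φ ⁻¹' {k} => (w p)⁻¹)
          (g := fun p => w p * f p ^ 2) fun p => ?_).trans (mul_le_mul_left (hC k) _)
        rw [← mul_assoc, ENNReal.inv_mul_cancel (hw₀ p) (hw p), one_mul]
    _ = C * ∑' p, w p * f p ^ 2 := by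
        rw [ENNReal.tsum_mul_left, ENNReal.tsum_fiberwise (fun p => w p * f p ^ 2)]

lemma sq_tsum_mul_tsum_subtype_le {r : α → β → Prop} {φ : P → κ} {ψ : Q → κ}
    (e : α × β ≃ P × Q) (hr : ∀ x, r x.1 x.2 ↔ ψ (e x).2 = φ (e x).1)
    {a : α → ℝ≥0∞} {g : β → ℝ≥0∞} {f₁ : P → ℝ≥0∞} {f₂ : Q → ℝ≥0∞}
    (hf : ∀ x, a x.1 * g x.2 = f₁ (e x).1 * f₂ (e x).2) :
    (∑' i, a i * ∑' b : {b // r i b}, g b) ^ 2 ≤ fiberEnergy φ f₁ * fiberEnergy ψ f₂ := by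
  refine le_of_eq_of_le ?_ (sq_tsum_le_fiberEnergy_mul φ ψ f₁ f₂)
  rw [tsum_mul_tsum_subtype r, ← (e.subtypeEquiv (q := fun y => ψ y.2 = φ y.1) hr).tsum_eq]
  exact congrArg (· ^ 2) (tsum_congr fun x => hf x)

end FiberEnergy

/-- The weight `⟨n⟩^{2s}` of `ℓ²_s(ℤ²)`, with values in `[0,∞]` as in `l2sZ2`. -/
noncomputable def bracketWeight (s : ℝ) (n : ℤ × ℤ) : ℝ≥0∞ := ENNReal.ofReal (jbZ2 n ^ (2 * s))

lemma bracketWeight_eq (s : ℝ) (n : ℤ × ℤ) :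
    bracketWeight s n = ENNReal.ofReal ((1 + (sqNorm n : ℝ)) ^ s) := by
  have hn : (sqNorm n : ℝ) = (n.1 : ℝ) ^ 2 + (n.2 : ℝ) ^ 2 := by
    unfold sqNorm
    push_cast
    rfl
  rw [bracketWeight, jbZ2, ← hn, Real.rpow_mul (Real.sqrt_nonneg _), Real.rpow_two,
    Real.sq_sqrt (one_add_sqNorm_pos n).le]

lemma bracketWeight_ne_zero (s : ℝ) (n : ℤ × ℤ) : bracketWeight s n ≠ 0 := by
  rw [bracketWeight_eq]
  exact (ENNReal.ofReal_pos.2 (Real.rpow_pos_of_pos (one_add_sqNorm_pos n) s)).ne'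

lemma bracketWeight_ne_top (s : ℝ) (n : ℤ × ℤ) : bracketWeight s n ≠ ⊤ := ENNReal.ofReal_ne_top

lemma inv_bracketWeight (s : ℝ) (n : ℤ × ℤ) :
    (bracketWeight s n)⁻¹ = ENNReal.ofReal ((1 + (sqNorm n : ℝ)) ^ (-s)) := by
  rw [bracketWeight_eq, ← ENNReal.ofReal_inv_of_pos (Real.rpow_pos_of_pos (one_add_sqNorm_pos n) s),
    Real.rpow_neg (one_add_sqNorm_pos n).le]

lemma l2sZ2_sq (s : ℝ) (ω : ℤ × ℤ → ℝ≥0) :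
    l2sZ2 s ω ^ 2 = ∑' n, bracketWeight s n * (ω n : ℝ≥0∞) ^ 2 := by
  rw [l2sZ2, ← ENNReal.rpow_two, ← ENNReal.rpow_mul, one_div_mul_cancel two_ne_zero,
    ENNReal.rpow_one]
  rfl

lemma l2sZ2_zero_sq (ω : ℤ × ℤ → ℝ≥0) : l2sZ2 0 ω ^ 2 = ∑' n, (ω n : ℝ≥0∞) ^ 2 := by
  simp only [l2sZ2_sq, bracketWeight, mul_zero, Real.rpow_zero, ENNReal.ofReal_one, one_mul]

/-- Total momentum and total energy of a pair of frequencies. -/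
def pairSum (p : (ℤ × ℤ) × (ℤ × ℤ)) : (ℤ × ℤ) × ℤ := (p.1 + p.2, sqNorm p.1 + sqNorm p.2)

/-- Momentum and energy transfer between the two frequencies of a pair. -/
def pairDiff (p : (ℤ × ℤ) × (ℤ × ℤ)) : (ℤ × ℤ) × ℤ := (p.1 - p.2, sqNorm p.1 - sqNorm p.2)

/-- The energy of `a ⊗ b` along `pairSum`: the sum of `a n * b m * a n' * b m'` over
`n + m = n' + m'`, `|n|² + |m|² = |n'|² + |m'|²`. -/
noncomputable def pairEnergy (a b : ℤ × ℤ → ℝ≥0∞) : ℝ≥0∞ :=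
  fiberEnergy pairSum fun p => a p.1 * b p.2

lemma sqNorm_two_smul_snd_sub {k : (ℤ × ℤ) × ℤ} {p : (ℤ × ℤ) × (ℤ × ℤ)} (hp : pairSum p = k) :
    sqNorm (2 • p.2 - k.1) = 2 * k.2 - sqNorm k.1 := by
  subst hp
  simp only [pairSum, sqNorm, two_nsmul, Prod.fst_add, Prod.snd_add, Prod.fst_sub, Prod.snd_sub]
  ring

lemma exists_tsum_pairSum_fiber_inv_bracketWeight_le {s : ℝ} (hs : 0 < s) :
    ∃ C : ℝ, 0 < C ∧ ∀ k, ∑' p : pairSum ⁻¹' {k}, (bracketWeight s p.1.2)⁻¹ ≤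
      ENNReal.ofReal C := by
  classical
  obtain ⟨C, hC, hsum⟩ := exists_sum_circle_le hs
  refine ⟨C, hC, fun k => tsum_le_of_sum_le' zero_le fun T => ?_⟩
  have snd_injective : Function.Injective fun p : pairSum ⁻¹' {k} => p.1.2 := fun p q hpq => by
    have sum_eq : p.1.1 + p.1.2 = q.1.1 + q.1.2 := congrArg Prod.fst (p.2.trans q.2.symm)
    have fst_eq : p.1.1 = q.1.1 := add_right_cancel (sum_eq.trans (congrArg (q.1.1 + ·) hpq.symm))
    exact Subtype.ext (Prod.ext fst_eq hpq)
  simp only [inv_bracketWeight]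
  rw [← Finset.sum_image (f := fun m => ENNReal.ofReal ((1 + (sqNorm m : ℝ)) ^ (-s)))
      snd_injective.injOn,
    ← ENNReal.ofReal_sum_of_nonneg fun m _ => Real.rpow_nonneg (one_add_sqNorm_pos m).le _]
  refine ENNReal.ofReal_le_ofReal (hsum k.1 (2 * k.2 - sqNorm k.1) _ fun m hm => ?_)
  obtain ⟨p, -, rfl⟩ := Finset.mem_image.1 hm
  exact sqNorm_two_smul_snd_sub p.2

theorem exists_pairEnergy_le {s : ℝ} (hs : 0 < s) :
    ∃ C : ℝ, 0 < C ∧ ∀ a b : ℤ × ℤ → ℝ≥0∞, pairEnergy a b ≤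
      ENNReal.ofReal C * ((∑' n, a n ^ 2) * ∑' n, bracketWeight s n * b n ^ 2) := by
  obtain ⟨C, hC, hfiber⟩ := exists_tsum_pairSum_fiber_inv_bracketWeight_le hs
  have energy_le := fiberEnergy_le_mul_tsum (φ := pairSum) (w := fun p => bracketWeight s p.2)
    (fun p => bracketWeight_ne_zero s p.2) (fun p => bracketWeight_ne_top s p.2) hfiber
  refine ⟨C, hC, fun a b => ?_⟩
  calc pairEnergy a b ≤ ENNReal.ofReal C * ∑' p : (ℤ × ℤ) × (ℤ × ℤ),
        bracketWeight s p.2 * (a p.1 * b p.2) ^ 2 :=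
        energy_le fun p => a p.1 * b p.2
    _ = ENNReal.ofReal C * ∑' n, ∑' m, a n ^ 2 * (bracketWeight s m * b m ^ 2) := by
        rw [← ENNReal.tsum_prod]
        simp only [mul_pow, mul_left_comm]
    _ = _ := by simp only [ENNReal.tsum_mul_left, ENNReal.tsum_mul_right]

lemma pairEnergy_comm (a b : ℤ × ℤ → ℝ≥0∞) : pairEnergy a b = pairEnergy b a := by
  rw [pairEnergy, ← fiberEnergy_comp_equiv (Equiv.prodComm _ _)]
  congr 1 <;> ext p : 1
  · exact Prod.ext (add_comm _ _) (add_comm _ _)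
  · exact mul_comm _ _

-- `n - m = n' - m'` and `n + m' = n' + m` are the same condition.
lemma fiberEnergy_pairDiff (a b : ℤ × ℤ → ℝ≥0∞) :
    fiberEnergy pairDiff (fun p => a p.1 * b p.2) = pairEnergy a b := by
  let swapSnd : ((ℤ × ℤ) × (ℤ × ℤ)) × ((ℤ × ℤ) × (ℤ × ℤ)) ≃
      ((ℤ × ℤ) × (ℤ × ℤ)) × ((ℤ × ℤ) × (ℤ × ℤ)) :=
    { toFun := fun x => ((x.1.1, x.2.2), (x.2.1, x.1.2))
      invFun := fun x => ((x.1.1, x.2.2), (x.2.1, x.1.2)) }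
  have pairDiff_eq_iff (x : ((ℤ × ℤ) × (ℤ × ℤ)) × ((ℤ × ℤ) × (ℤ × ℤ))) :
      pairDiff x.2 = pairDiff x.1 ↔ pairSum (swapSnd x).2 = pairSum (swapSnd x).1 := by
    simp only [swapSnd, Equiv.coe_fn_mk, pairDiff, pairSum, Prod.ext_iff,
      Prod.fst_add, Prod.snd_add, Prod.fst_sub, Prod.snd_sub]
    omega
  rw [pairEnergy, fiberEnergy_eq_tsum, fiberEnergy_eq_tsum,
    ← (swapSnd.subtypeEquiv (q := fun x => pairSum x.2 = pairSum x.1) pairDiff_eq_iff).tsum_eq]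
  refine tsum_congr fun x => ?_
  simp only [swapSnd, Equiv.subtypeEquiv_apply, Equiv.coe_fn_mk]
  ring

/-- The convolution of `w₁`, `w₂`, `w₃` restricted to the level set `Φ = μ`, as a function of the
output frequency. -/
noncomputable def resonantConv (μ : ℤ) (w₁ w₂ w₃ : ℤ × ℤ → ℝ≥0∞) (n : ℤ × ℤ) : ℝ≥0∞ :=
  ∑' p : {q : (ℤ × ℤ) × (ℤ × ℤ) × (ℤ × ℤ) //
    q.1 - q.2.1 + q.2.2 = n ∧ PhiZ2 n q.1 q.2.1 q.2.2 = μ}, w₁ p.1.1 * w₂ p.1.2.1 * w₃ p.1.2.2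

lemma sq_tsum_mul_resonantConv_le_pairSum (μ : ℤ) (a w₁ w₂ w₃ : ℤ × ℤ → ℝ≥0∞) :
    (∑' n, a n * resonantConv μ w₁ w₂ w₃ n) ^ 2 ≤ pairEnergy a w₂ * pairEnergy w₁ w₃ := by
  let regroup : (ℤ × ℤ) × (ℤ × ℤ) × (ℤ × ℤ) × (ℤ × ℤ) ≃
      ((ℤ × ℤ) × (ℤ × ℤ)) × ((ℤ × ℤ) × (ℤ × ℤ)) :=
    { toFun := fun x => ((x.1, x.2.2.1), (x.2.1, x.2.2.2))
      invFun := fun y => (y.1.1, y.2.1, y.1.2, y.2.2) }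
  rw [pairEnergy, pairEnergy,
    ← fiberEnergy_comp_of_injective (add_left_injective ((0, μ) : (ℤ × ℤ) × ℤ)) pairSum
      fun p => w₁ p.1 * w₃ p.2]
  refine sq_tsum_mul_tsum_subtype_le (β := (ℤ × ℤ) × (ℤ × ℤ) × (ℤ × ℤ)) regroup (fun x => ?_)
    (g := fun q => w₁ q.1 * w₂ q.2.1 * w₃ q.2.2) fun x => ?_
  · simp only [regroup, Equiv.coe_fn_mk, pairSum, PhiZ2, sqNorm, Prod.ext_iff, Prod.fst_add,
      Prod.snd_add, Prod.fst_sub, Prod.snd_sub, Prod.fst_zero, Prod.snd_zero]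
    omega
  · simp only [regroup, Equiv.coe_fn_mk]
    ring

lemma sq_tsum_mul_resonantConv_le_pairDiff (μ : ℤ) (a w₁ w₂ w₃ : ℤ × ℤ → ℝ≥0∞) :
    (∑' n, a n * resonantConv μ w₁ w₂ w₃ n) ^ 2 ≤ pairEnergy a w₁ * pairEnergy w₂ w₃ := by
  rw [← fiberEnergy_pairDiff, ← fiberEnergy_pairDiff,
    ← fiberEnergy_comp_of_injective (sub_right_injective (b := ((0, μ) : (ℤ × ℤ) × ℤ))) pairDiff]
  refine sq_tsum_mul_tsum_subtype_le (β := (ℤ × ℤ) × (ℤ × ℤ) × (ℤ × ℤ))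
    (Equiv.prodAssoc _ _ _).symm (fun x => ?_)
    (g := fun q => w₁ q.1 * w₂ q.2.1 * w₃ q.2.2) fun x => ?_
  · simp only [Equiv.prodAssoc_symm_apply, pairDiff, PhiZ2, sqNorm, Prod.ext_iff, Prod.fst_add,
      Prod.snd_add, Prod.fst_sub, Prod.snd_sub, Prod.fst_zero, Prod.snd_zero]
    omega
  · simp only [Equiv.prodAssoc_symm_apply]
    ring

lemma tsum_resonantConv_sq_le_of_pairSum {w₂ : ℤ × ℤ → ℝ≥0∞} {K : ℝ≥0∞}
    (hK : ∀ a, pairEnergy a w₂ ≤ (∑' n, a n ^ 2) * K) (μ : ℤ) (w₁ w₃ : ℤ × ℤ → ℝ≥0∞) :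
    ∑' n, resonantConv μ w₁ w₂ w₃ n ^ 2 ≤ K * pairEnergy w₁ w₃ :=
  tsum_sq_le_of_forall_sq_tsum_mul_le fun a =>
    (sq_tsum_mul_resonantConv_le_pairSum μ a w₁ w₂ w₃).trans <| by
      rw [← mul_assoc]
      gcongr
      exact hK a

lemma tsum_resonantConv_sq_le_of_pairDiff {w₁ : ℤ × ℤ → ℝ≥0∞} {K : ℝ≥0∞}
    (hK : ∀ a, pairEnergy a w₁ ≤ (∑' n, a n ^ 2) * K) (μ : ℤ) (w₂ w₃ : ℤ × ℤ → ℝ≥0∞) :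
    ∑' n, resonantConv μ w₁ w₂ w₃ n ^ 2 ≤ K * pairEnergy w₂ w₃ :=
  tsum_sq_le_of_forall_sq_tsum_mul_le fun a =>
    (sq_tsum_mul_resonantConv_le_pairDiff μ a w₁ w₂ w₃).trans <| by
      rw [← mul_assoc]
      gcongr
      exact hK a

/-- Trilinear estimate on the level set `Φ = μ`, uniform in `μ`:
for every `s₁ > 0` and each `j ∈ {1,2,3}`, the `ℓ²` norm of the restricted convolution is
bounded by `C ‖ω⁽ʲ⁾‖_{ℓ²} ∏_{l≠j} ‖ω⁽ˡ⁾‖_{ℓ²_{s₁}}`. -/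
theorem trilinear_resonance_estimate (s₁ : ℝ) (hs₁ : 0 < s₁) :
    ∃ C : ℝ, 0 < C ∧
      ∀ (μ : ℤ) (ω₁ ω₂ ω₃ : ℤ × ℤ → ℝ≥0),
        (∑' n : ℤ × ℤ,
            (∑' p : {q : (ℤ × ℤ) × (ℤ × ℤ) × (ℤ × ℤ) //
                q.1 - q.2.1 + q.2.2 = n ∧ PhiZ2 n q.1 q.2.1 q.2.2 = μ},
              ((ω₁ p.1.1 : ℝ≥0∞) * (ω₂ p.1.2.1 : ℝ≥0∞) * (ω₃ p.1.2.2 : ℝ≥0∞))) ^ 2) ^ (1/2 : ℝ)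
          ≤ ENNReal.ofReal C * l2sZ2 0 ω₁ * l2sZ2 s₁ ω₂ * l2sZ2 s₁ ω₃ ∧
        (∑' n : ℤ × ℤ,
            (∑' p : {q : (ℤ × ℤ) × (ℤ × ℤ) × (ℤ × ℤ) //
                q.1 - q.2.1 + q.2.2 = n ∧ PhiZ2 n q.1 q.2.1 q.2.2 = μ},
              ((ω₁ p.1.1 : ℝ≥0∞) * (ω₂ p.1.2.1 : ℝ≥0∞) * (ω₃ p.1.2.2 : ℝ≥0∞))) ^ 2) ^ (1/2 : ℝ)
          ≤ ENNReal.ofReal C * l2sZ2 s₁ ω₁ * l2sZ2 0 ω₂ * l2sZ2 s₁ ω₃ ∧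
        (∑' n : ℤ × ℤ,
            (∑' p : {q : (ℤ × ℤ) × (ℤ × ℤ) × (ℤ × ℤ) //
                q.1 - q.2.1 + q.2.2 = n ∧ PhiZ2 n q.1 q.2.1 q.2.2 = μ},
              ((ω₁ p.1.1 : ℝ≥0∞) * (ω₂ p.1.2.1 : ℝ≥0∞) * (ω₃ p.1.2.2 : ℝ≥0∞))) ^ 2) ^ (1/2 : ℝ)
          ≤ ENNReal.ofReal C * l2sZ2 s₁ ω₁ * l2sZ2 s₁ ω₂ * l2sZ2 0 ω₃ := by
  obtain ⟨C, hC, hpair⟩ := exists_pairEnergy_le hs₁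
  refine ⟨C, hC, fun μ ω₁ ω₂ ω₃ => ?_⟩
  have dual_le (ω : ℤ × ℤ → ℝ≥0) (a : ℤ × ℤ → ℝ≥0∞) : pairEnergy a (fun n => ω n) ≤
      (∑' n, a n ^ 2) * (ENNReal.ofReal C * l2sZ2 s₁ ω ^ 2) := by
    rw [l2sZ2_sq, mul_left_comm]
    exact hpair a _
  have energy_le (α β : ℤ × ℤ → ℝ≥0) : pairEnergy (fun n => α n) (fun n => β n) ≤
      l2sZ2 0 α ^ 2 * (ENNReal.ofReal C * l2sZ2 s₁ β ^ 2) := by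
    rw [l2sZ2_zero_sq]
    exact dual_le β _
  refine ⟨rpow_one_half_le_of_le_sq ?_, rpow_one_half_le_of_le_sq ?_,
    rpow_one_half_le_of_le_sq ?_⟩
  · refine (tsum_resonantConv_sq_le_of_pairSum (dual_le ω₂) μ (ω₁ ·) (ω₃ ·)).trans ?_
    exact (mul_le_mul_right (energy_le ω₁ ω₃) _).trans_eq (by ring)
  · refine (tsum_resonantConv_sq_le_of_pairDiff (dual_le ω₁) μ (ω₂ ·) (ω₃ ·)).trans ?_
    exact (mul_le_mul_right (energy_le ω₂ ω₃) _).trans_eq (by ring)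
  · refine (tsum_resonantConv_sq_le_of_pairSum (dual_le ω₂) μ (ω₁ ·) (ω₃ ·)).trans ?_
    rw [pairEnergy_comm]
    exact (mul_le_mul_right (energy_le ω₃ ω₁) _).trans_eq (by ring)
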